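/- arXiv:1604.03089 — 2 statements merged into one kernel-verified Lean document; each statement's English description precedes it below -/
import Mathlib

section
/- Let ρ, σ ∈ M_n(ℂ) be positive semidefinite with supp ρ ⊆ supp σ and ρσ ≠ σρ. Then the Umegaki relative entropy is strictly smaller than the Belavkin–Staszewski relative entropy: Tr( ρ (log ρ − log σ) ) < Tr( ρ · log( ρ^{1/2} σ^{−1} ρ^{1/2} ) ), where σ^{−1} is the Moore–Penrose inverse of σ and, for a positive semidefinite matrix A, log A denotes the Hermitian matrix obtained by applying the logarithm to the nonzero eigenvalues of A and the value 0 to the eigenvalue 0 (so both sides are the usual support-restricted expressions, which are well defined since supp ρ ⊆ supp σ and supp(ρ^{1/2} σ^{−1} ρ^{1/2}) = supp ρ). -/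
open Matrix
open scoped ComplexOrder

/-- Moore–Penrose power of a matrix: apply `x ↦ x ^ t` to the nonzero eigenvalues
(with `0 ^ t := 0`) via the continuous functional calculus; for `t < 0` this is the
corresponding power of the Moore–Penrose inverse. -/
noncomputable def mpow {n : ℕ} (A : Matrix (Fin n) (Fin n) ℂ) (t : ℝ) :
    Matrix (Fin n) (Fin n) ℂ :=
  cfc (fun x : ℝ => if x = 0 then 0 else x ^ t) A

/-- The logarithm of a positive semidefinite matrix: apply `log` to the nonzero
eigenvalues and `0` to the eigenvalue `0` (note `Real.log 0 = 0`). -/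
noncomputable def mlog {n : ℕ} (A : Matrix (Fin n) (Fin n) ℂ) :
    Matrix (Fin n) (Fin n) ℂ :=
  cfc Real.log A

/-!
Both entropies are `f`-divergences for `f x = x log x`. The Umegaki entropy is the standard one,
`∑ᵢⱼ qⱼ |⟨eᵢ, uⱼ⟩|² f (rᵢ / qⱼ)` in eigenbases `e` of `ρ` and `u` of `σ`; the Belavkin–Staszewski
entropy is the maximal one, `Tr σ f(T)` with `T = σ^{-1/2} ρ σ^{-1/2}`. The two divergences agree
for `f = 1` and for `f x = x`. Hence, for `f x = x log (x + s)`, the derivative in `s` of their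
difference is `s` times the difference for `f x = (x + s)⁻¹`, up to sign, and the difference itself
tends to `0` as `s → ∞`. So it is enough to compare the divergences for `f x = (x + s)⁻¹`, `s > 0`.

For this `f` the standard divergence is `Tr Y σ`, where `Y` solves the Sylvester equation
`ρ Y + s Y σ = σ`, and the maximal one is `Tr M C Mᴴ`, where `M = σ^{1/2}` and `C = (T + s)⁻¹`.
Completing the square, with `A = Y M - M C` and `B = Yᴴ M - M C`, gives
`Tr M C Mᴴ - Tr Y σ = Tr B T Bᴴ + s Tr A Aᴴ ≥ 0`, and equality forces `T` to commute with `Mᴴ M`,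
hence `ρ` with `σ`.
-/

section LogComparison

open Filter Topology

variable {ι κ : Type*} [Fintype ι] [Fintype κ]

theorem hasDerivAt_sum_mul_log_add (w : ι → ℝ) {x : ι → ℝ} {s : ℝ} (hxs : ∀ i, x i + s ≠ 0) :
    HasDerivAt (fun s ↦ ∑ i, w i * Real.log (x i + s)) (∑ i, w i / (x i + s)) s :=
  .fun_sum fun i _ ↦ by
    simpa [div_eq_mul_inv] using (((hasDerivAt_id s).const_add (x i)).log (hxs i)).const_mul (w i)

theorem tendsto_sum_mul_log_add_atTop {w : ι → ℝ} (x : ι → ℝ) (hw : ∑ i, w i = 0) :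
    Tendsto (fun s ↦ ∑ i, w i * Real.log (x i + s)) atTop (𝓝 0) := by
  have hterm (i : ι) : Tendsto (fun s ↦ w i * (Real.log (s + x i) - Real.log s)) atTop (𝓝 0) := by
    simpa using (Real.tendsto_log_comp_add_sub_log (x i)).const_mul (w i)
  have hsum := tendsto_finsetSum Finset.univ fun i _ ↦ hterm i
  simpa [mul_sub, Finset.sum_sub_distrib, ← Finset.sum_mul, hw, add_comm] using hsum

theorem sum_mul_log_neg {w x : ι → ℝ} (hx : ∀ i, 0 ≤ x i) (hwx : ∀ i, w i ≠ 0 → x i ≠ 0)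
    (hw : ∑ i, w i = 0) (hpos : ∀ s, 0 < s → 0 < ∑ i, w i / (x i + s)) :
    ∑ i, w i * Real.log (x i) < 0 := by
  set F : ℝ → ℝ := fun s ↦ ∑ i, w i * Real.log (x i + s) with hF
  have hderiv (s : ℝ) (hs : 0 < s) : HasDerivAt F (∑ i, w i / (x i + s)) s :=
    hasDerivAt_sum_mul_log_add w fun i ↦ (add_pos_of_nonneg_of_pos (hx i) hs).ne'
  have hcont : ContinuousOn F (Set.Ici 0) := by
    refine continuousOn_finsetSum _ fun i _ ↦ ?_
    by_cases hi : w i = 0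
    · simpa only [hi, zero_mul] using continuousOn_const
    · have hxi : 0 < x i := (hx i).lt_of_ne' (hwx i hi)
      exact continuousOn_const.mul <| (continuousOn_const.add continuousOn_id).log fun s hs ↦
        (add_pos_of_pos_of_nonneg hxi hs).ne'
  have hmono : StrictMonoOn F (Set.Ici 0) := by
    refine strictMonoOn_of_deriv_pos (convex_Ici 0) hcont fun s hs ↦ ?_
    rw [interior_Ici] at hs
    exact (hderiv s hs).deriv ▸ hpos s hs
  have hF_one : F 1 ≤ 0 := by
    refine ge_of_tendsto (tendsto_sum_mul_log_add_atTop x hw) ?_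
    filter_upwards [eventually_ge_atTop 1] with s hs
    exact hmono.monotoneOn (by simp) (zero_le_one.trans hs) hs
  calc ∑ i, w i * Real.log (x i) = F 0 := by simp [hF]
    _ < F 1 := hmono (by simp) (by simp) one_pos
    _ ≤ 0 := hF_one

theorem sum_mul_mul_log_neg {w x : ι → ℝ} (hx : ∀ i, 0 ≤ x i) (hw : ∑ i, w i = 0)
    (hwx : ∑ i, w i * x i = 0) (hneg : ∀ s, 0 < s → ∑ i, w i * (x i + s)⁻¹ < 0) :
    ∑ i, w i * (x i * Real.log (x i)) < 0 := by
  simp only [← mul_assoc]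
  refine sum_mul_log_neg hx (fun i hi ↦ right_ne_zero_of_mul hi) hwx fun s hs ↦ ?_
  have hsplit (i : ι) : w i * x i / (x i + s) = w i - s * (w i * (x i + s)⁻¹) := by
    have := (add_pos_of_nonneg_of_pos (hx i) hs).ne'
    field_simp
    ring
  simp only [hsplit, Finset.sum_sub_distrib, hw, ← Finset.mul_sum, zero_sub]
  exact neg_pos.2 (mul_neg_of_pos_of_neg hs (hneg s hs))

theorem sum_mul_mul_log_lt {v x : ι → ℝ} {w y : κ → ℝ} (hx : ∀ i, 0 ≤ x i) (hy : ∀ k, 0 ≤ y k)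
    (hsum : ∑ i, v i = ∑ k, w k) (hmean : ∑ i, v i * x i = ∑ k, w k * y k)
    (hlt : ∀ s, 0 < s → ∑ i, v i * (x i + s)⁻¹ < ∑ k, w k * (y k + s)⁻¹) :
    ∑ i, v i * (x i * Real.log (x i)) < ∑ k, w k * (y k * Real.log (y k)) := by
  have hneg := sum_mul_mul_log_neg (w := Sum.elim v (-w)) (x := Sum.elim x y)
    (Sum.forall.2 ⟨hx, hy⟩) (by simp [hsum]) (by simp [hmean])
    fun s hs ↦ by simpa using hlt s hs
  simpa using hneg

end LogComparison

section FunctionalCalculus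

variable {𝕜 m n : Type*} [RCLike 𝕜] [Fintype m] [DecidableEq m] [Fintype n] [DecidableEq n]

theorem cfc_mul_cfc (A : Matrix n n 𝕜) (f g : ℝ → ℝ) :
    cfc f A * cfc g A = cfc (fun x ↦ f x * g x) A :=
  (cfc_mul f g A (A.finite_real_spectrum.continuousOn f)
    (A.finite_real_spectrum.continuousOn g)).symm

theorem cfc_mul_self {A : Matrix n n 𝕜} (hA : A.IsHermitian) (f : ℝ → ℝ) :
    cfc f A * A = cfc (fun x ↦ f x * x) A := by
  simpa only [cfc_id ℝ A hA.isSelfAdjoint, id] using cfc_mul_cfc A f id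

theorem self_mul_cfc {A : Matrix n n 𝕜} (hA : A.IsHermitian) (f : ℝ → ℝ) :
    A * cfc f A = cfc (fun x ↦ x * f x) A := by
  simpa only [cfc_id ℝ A hA.isSelfAdjoint, id] using cfc_mul_cfc A id f

theorem isHermitian_cfc (f : ℝ → ℝ) (A : Matrix n n 𝕜) : (cfc f A).IsHermitian :=
  cfc_predicate f A

/-- The unitary matrix whose columns are the eigenvectors of `A`. -/
noncomputable def eigenvectorMatrix {A : Matrix n n 𝕜} (hA : A.IsHermitian) : Matrix n n 𝕜 :=
  hA.eigenvectorUnitary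

theorem conjTranspose_eigenvectorMatrix_mul_self {A : Matrix n n 𝕜} (hA : A.IsHermitian) :
    (eigenvectorMatrix hA)ᴴ * eigenvectorMatrix hA = 1 :=
  Unitary.coe_star_mul_self hA.eigenvectorUnitary

theorem eigenvectorMatrix_mul_conjTranspose_self {A : Matrix n n 𝕜} (hA : A.IsHermitian) :
    eigenvectorMatrix hA * (eigenvectorMatrix hA)ᴴ = 1 :=
  Unitary.coe_mul_star_self hA.eigenvectorUnitary

theorem cfc_eq_eigenvectorMatrix_mul {A : Matrix n n 𝕜} (hA : A.IsHermitian) (f : ℝ → ℝ) :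
    cfc f A = eigenvectorMatrix hA * diagonal (fun i ↦ (f (hA.eigenvalues i) : 𝕜)) *
      (eigenvectorMatrix hA)ᴴ := by
  rw [hA.cfc_eq, IsHermitian.cfc, Unitary.conjStarAlgAut_apply]
  rfl

/-- The coordinates `⟨eᵢ, X uⱼ⟩` of `X` in the eigenbases `e` of `A` and `u` of `B`. In these
coordinates left multiplication by functions of `A` and right multiplication by functions of `B`
are simultaneously diagonal. -/
noncomputable def eigenbasisCoords {A : Matrix m m 𝕜} {B : Matrix n n 𝕜}
    (hA : A.IsHermitian) (hB : B.IsHermitian) (X : Matrix m n 𝕜) : Matrix m n 𝕜 :=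
  (eigenvectorMatrix hA)ᴴ * X * eigenvectorMatrix hB

section Rectangular

variable {A : Matrix m m 𝕜} {B : Matrix n n 𝕜} (hA : A.IsHermitian) (hB : B.IsHermitian)

theorem eigenbasisCoords_bijective : Function.Bijective (eigenbasisCoords hA hB) := by
  refine Function.bijective_iff_has_inverse.2
    ⟨fun Z ↦ eigenvectorMatrix hA * Z * (eigenvectorMatrix hB)ᴴ, fun X ↦ ?_, fun Z ↦ ?_⟩
  · simp only [eigenbasisCoords, ← Matrix.mul_assoc, eigenvectorMatrix_mul_conjTranspose_self,
      Matrix.one_mul]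
    rw [Matrix.mul_assoc, eigenvectorMatrix_mul_conjTranspose_self, Matrix.mul_one]
  · simp only [eigenbasisCoords, ← Matrix.mul_assoc, conjTranspose_eigenvectorMatrix_mul_self,
      Matrix.one_mul]
    rw [Matrix.mul_assoc, conjTranspose_eigenvectorMatrix_mul_self, Matrix.mul_one]

theorem eigenbasisCoords_add (X Z : Matrix m n 𝕜) :
    eigenbasisCoords hA hB (X + Z) = eigenbasisCoords hA hB X + eigenbasisCoords hA hB Z := by
  simp only [eigenbasisCoords, Matrix.mul_add, Matrix.add_mul]

theorem eigenbasisCoords_smul (c : ℝ) (X : Matrix m n 𝕜) :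
    eigenbasisCoords hA hB (c • X) = c • eigenbasisCoords hA hB X := by
  simp only [eigenbasisCoords, Matrix.mul_smul, Matrix.smul_mul]

theorem eigenbasisCoords_cfc_mul (f : ℝ → ℝ) (X : Matrix m n 𝕜) (i : m) (j : n) :
    eigenbasisCoords hA hB (cfc f A * X) i j =
      f (hA.eigenvalues i) * eigenbasisCoords hA hB X i j := by
  have hdiag : eigenbasisCoords hA hB (cfc f A * X) =
      diagonal (fun i ↦ (f (hA.eigenvalues i) : 𝕜)) * eigenbasisCoords hA hB X := by
    simp only [eigenbasisCoords, cfc_eq_eigenvectorMatrix_mul hA, ← Matrix.mul_assoc,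
      conjTranspose_eigenvectorMatrix_mul_self, Matrix.one_mul]
  rw [hdiag, diagonal_mul]

theorem eigenbasisCoords_mul_cfc (g : ℝ → ℝ) (X : Matrix m n 𝕜) (i : m) (j : n) :
    eigenbasisCoords hA hB (X * cfc g B) i j =
      eigenbasisCoords hA hB X i j * g (hB.eigenvalues j) := by
  have hdiag : eigenbasisCoords hA hB (X * cfc g B) =
      eigenbasisCoords hA hB X * diagonal (fun j ↦ (g (hB.eigenvalues j) : 𝕜)) := by
    simp only [eigenbasisCoords, cfc_eq_eigenvectorMatrix_mul hB, Matrix.mul_assoc,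
      conjTranspose_eigenvectorMatrix_mul_self, Matrix.mul_one]
  rw [hdiag, mul_diagonal]

theorem eigenbasisCoords_mul_left (X : Matrix m n 𝕜) (i : m) (j : n) :
    eigenbasisCoords hA hB (A * X) i j = hA.eigenvalues i * eigenbasisCoords hA hB X i j := by
  simpa only [cfc_id ℝ A hA.isSelfAdjoint, id] using eigenbasisCoords_cfc_mul hA hB id X i j

theorem eigenbasisCoords_mul_right (X : Matrix m n 𝕜) (i : m) (j : n) :
    eigenbasisCoords hA hB (X * B) i j = eigenbasisCoords hA hB X i j * hB.eigenvalues j := by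
  simpa only [cfc_id ℝ B hB.isSelfAdjoint, id] using eigenbasisCoords_mul_cfc hA hB id X i j

end Rectangular

theorem mul_cfc_eq_cfc_mul_of_mul_eq_mul {A : Matrix m m 𝕜} {B : Matrix n n 𝕜}
    (hA : A.IsHermitian) (hB : B.IsHermitian) {K : Matrix m n 𝕜} (hK : K * B = A * K)
    (f : ℝ → ℝ) : K * cfc f B = cfc f A * K := by
  apply (eigenbasisCoords_bijective hA hB).injective
  ext i j
  have hij : (hB.eigenvalues j : 𝕜) * eigenbasisCoords hA hB K i j =
      hA.eigenvalues i * eigenbasisCoords hA hB K i j := by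
    rw [mul_comm, ← eigenbasisCoords_mul_right, hK, eigenbasisCoords_mul_left]
  rw [eigenbasisCoords_mul_cfc, eigenbasisCoords_cfc_mul, mul_comm]
  rcases mul_eq_mul_right_iff.1 hij with heq | hzero
  · rw [RCLike.ofReal_injective heq]
  · rw [hzero, mul_zero, mul_zero]

theorem trace_conjTranspose_mul_mul_mul_cfc (K : Matrix m n 𝕜) (X : Matrix m m 𝕜) (f : ℝ → ℝ) :
    (Kᴴ * X * K * cfc f (Kᴴ * K)).trace = (X * cfc (fun x ↦ x * f x) (K * Kᴴ)).trace := by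
  have hintertwine : K * cfc f (Kᴴ * K) = cfc f (K * Kᴴ) * K :=
    mul_cfc_eq_cfc_mul_of_mul_eq_mul (isHermitian_mul_conjTranspose_self K)
      (isHermitian_conjTranspose_mul_self K) (Matrix.mul_assoc K Kᴴ K).symm f
  calc (Kᴴ * X * K * cfc f (Kᴴ * K)).trace = (Kᴴ * (X * cfc f (K * Kᴴ) * K)).trace := by
        simp only [Matrix.mul_assoc, hintertwine]
    _ = (X * cfc (fun x ↦ x * f x) (K * Kᴴ)).trace := by
        rw [trace_mul_comm, Matrix.mul_assoc, Matrix.mul_assoc,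
          cfc_mul_self (isHermitian_mul_conjTranspose_self K)]
        simp only [mul_comm]

section Overlap

variable {A B : Matrix n n 𝕜} (hA : A.IsHermitian) (hB : B.IsHermitian)

/-- The squared overlap `|⟨eᵢ, uⱼ⟩|²` of the `i`-th eigenvector of `A` and the `j`-th one of `B`. -/
noncomputable def eigenbasisOverlap (i j : n) : ℝ :=
  ‖eigenbasisCoords hA hB 1 i j‖ ^ 2

theorem trace_eq_trace_eigenbasisCoords_mul (X : Matrix n n 𝕜) :
    X.trace = (eigenbasisCoords hA hB X * (eigenbasisCoords hA hB 1)ᴴ).trace := by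
  simp only [eigenbasisCoords, Matrix.mul_one, conjTranspose_mul, conjTranspose_conjTranspose]
  rw [← Matrix.mul_assoc, Matrix.mul_assoc _ (eigenvectorMatrix hB),
    eigenvectorMatrix_mul_conjTranspose_self, Matrix.mul_one, trace_mul_comm, ← Matrix.mul_assoc,
    eigenvectorMatrix_mul_conjTranspose_self, Matrix.one_mul]

theorem re_trace_eq_sum_mul_eigenbasisOverlap {X : Matrix n n 𝕜} {φ : n → n → ℝ}
    (hX : ∀ i j, eigenbasisCoords hA hB X i j = φ i j * eigenbasisCoords hA hB 1 i j) :
    RCLike.re X.trace = ∑ p : n × n, φ p.1 p.2 * eigenbasisOverlap hA hB p.1 p.2 := by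
  rw [trace_eq_trace_eigenbasisCoords_mul hA hB, Fintype.sum_prod_type]
  simp only [trace, diag_apply, mul_apply, conjTranspose_apply, map_sum]
  refine Finset.sum_congr rfl fun i _ ↦ Finset.sum_congr rfl fun j _ ↦ ?_
  rw [hX, mul_assoc, RCLike.star_def, RCLike.mul_conj, eigenbasisOverlap]
  norm_cast

theorem re_trace_cfc_mul_cfc (f g : ℝ → ℝ) :
    RCLike.re (cfc f A * cfc g B).trace = ∑ p : n × n,
      f (hA.eigenvalues p.1) * g (hB.eigenvalues p.2) * eigenbasisOverlap hA hB p.1 p.2 := by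
  refine re_trace_eq_sum_mul_eigenbasisOverlap hA hB
    (φ := fun i j ↦ f (hA.eigenvalues i) * g (hB.eigenvalues j)) fun i j ↦ ?_
  rw [eigenbasisCoords_cfc_mul, ← Matrix.one_mul (cfc g B), eigenbasisCoords_mul_cfc]
  push_cast
  ring

end Overlap

section SupportProjection

/-- The orthogonal projection onto the support of a Hermitian matrix. -/
noncomputable def supportProjection (A : Matrix n n 𝕜) : Matrix n n 𝕜 :=
  cfc (fun x : ℝ ↦ if x = 0 then 0 else 1) A

theorem mul_supportProjection_self {A : Matrix n n 𝕜} (hA : A.IsHermitian) :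
    A * supportProjection A = A := by
  rw [supportProjection, self_mul_cfc hA]
  conv_rhs => rw [← cfc_id' ℝ A hA.isSelfAdjoint]
  congr with x
  split_ifs with hx
  · rw [hx, zero_mul]
  · rw [mul_one]

theorem mul_supportProjection_of_ker_le {l : Type*} {A : Matrix l n 𝕜} {B : Matrix n n 𝕜}
    (hB : B.IsHermitian) (hker : ∀ v : n → 𝕜, B *ᵥ v = 0 → A *ᵥ v = 0) :
    A * supportProjection B = A := by
  have hB_zero : B * (1 - supportProjection B) = 0 := by
    rw [Matrix.mul_sub, Matrix.mul_one, mul_supportProjection_self hB, sub_self]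
  have hA_zero : A * (1 - supportProjection B) = 0 := by
    ext i j
    exact congrFun (hker ((1 - supportProjection B).col j) (funext fun k ↦ congrFun₂ hB_zero k j)) i
  rwa [Matrix.mul_sub, Matrix.mul_one, sub_eq_zero, eq_comm] at hA_zero

theorem eigenvalue_mul_eigenbasisOverlap_eq_zero {A B : Matrix n n 𝕜} (hA : A.IsHermitian)
    (hB : B.IsHermitian) (hAB : A * supportProjection B = A) {j : n} (hj : hB.eigenvalues j = 0)
    (i : n) : hA.eigenvalues i * eigenbasisOverlap hA hB i j = 0 := by
  have hcoord : (hA.eigenvalues i : 𝕜) * eigenbasisCoords hA hB 1 i j = 0 := by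
    calc (hA.eigenvalues i : 𝕜) * eigenbasisCoords hA hB 1 i j
        = eigenbasisCoords hA hB (A * supportProjection B) i j := by
          rw [← eigenbasisCoords_mul_left, Matrix.mul_one, hAB]
      _ = 0 := by
          rw [supportProjection, eigenbasisCoords_mul_cfc, if_pos hj, RCLike.ofReal_zero, mul_zero]
  rcases mul_eq_zero.1 hcoord with hi | hij
  · rw [RCLike.ofReal_eq_zero.1 hi, zero_mul]
  · rw [eigenbasisOverlap, hij, norm_zero, zero_pow two_ne_zero, mul_zero]

end SupportProjection

section PosSemidef

variable {A : Matrix n n 𝕜}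

theorem cfc_congr_of_posSemidef (hA : A.PosSemidef) {f g : ℝ → ℝ} (hfg : ∀ x, 0 ≤ x → f x = g x) :
    cfc f A = cfc g A := by
  refine cfc_congr fun x hx ↦ ?_
  rw [hA.isHermitian.spectrum_real_eq_range_eigenvalues] at hx
  obtain ⟨i, rfl⟩ := hx
  exact hfg _ (hA.eigenvalues_nonneg i)

theorem cfc_sqrt_mul_cfc_sqrt (hA : A.PosSemidef) : cfc Real.sqrt A * cfc Real.sqrt A = A := by
  rw [cfc_mul_cfc, cfc_congr_of_posSemidef hA fun x hx ↦ Real.mul_self_sqrt hx,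
    cfc_id' ℝ A hA.isHermitian.isSelfAdjoint]

theorem cfc_sqrt_mul_cfc_inv_sqrt (hA : A.PosSemidef) :
    cfc Real.sqrt A * cfc (fun x ↦ (√x)⁻¹) A = supportProjection A := by
  rw [cfc_mul_cfc]
  refine cfc_congr_of_posSemidef hA fun x hx ↦ ?_
  split_ifs with hx0
  · rw [hx0, Real.sqrt_zero, zero_mul]
  · exact mul_inv_cancel₀ (Real.sqrt_ne_zero'.2 (hx.lt_of_ne' hx0))

theorem cfc_inv_sqrt_mul_cfc_inv_sqrt (hA : A.PosSemidef) :
    cfc (fun x ↦ (√x)⁻¹) A * cfc (fun x ↦ (√x)⁻¹) A = cfc (fun x : ℝ ↦ x⁻¹) A := by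
  rw [cfc_mul_cfc]
  refine cfc_congr_of_posSemidef hA fun x hx ↦ ?_
  rw [← mul_inv, Real.mul_self_sqrt hx]

theorem cfc_inv_sqrt_mul_self_mul_cfc_inv_sqrt (hA : A.PosSemidef) :
    cfc (fun x ↦ (√x)⁻¹) A * A * cfc (fun x ↦ (√x)⁻¹) A = supportProjection A := by
  rw [cfc_mul_self hA.isHermitian, cfc_mul_cfc]
  refine cfc_congr_of_posSemidef hA fun x hx ↦ ?_
  split_ifs with hx0
  · rw [hx0, mul_zero, zero_mul]
  · rw [mul_right_comm, ← mul_inv, Real.mul_self_sqrt hx, inv_mul_cancel₀ hx0]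

theorem cfc_sqrt_mulVec_eq_zero (hA : A.PosSemidef) {v : n → 𝕜} (hv : A *ᵥ v = 0) :
    cfc Real.sqrt A *ᵥ v = 0 := by
  rw [← conjTranspose_mul_self_mulVec_eq_zero, (isHermitian_cfc _ _).eq, cfc_sqrt_mul_cfc_sqrt hA,
    hv]

theorem self_mul_cfc_inv_add_add_smul (hA : A.PosSemidef) {s : ℝ} (hs : 0 < s) :
    A * cfc (fun x ↦ (x + s)⁻¹) A + s • cfc (fun x ↦ (x + s)⁻¹) A = 1 := by
  have hcont (f : ℝ → ℝ) : ContinuousOn f (spectrum ℝ A) := A.finite_real_spectrum.continuousOn f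
  rw [self_mul_cfc hA.isHermitian, ← cfc_smul s _ A (hcont _), ← cfc_add _ _ _ (hcont _) (hcont _),
    ← cfc_const_one ℝ A hA.isHermitian.isSelfAdjoint]
  refine cfc_congr_of_posSemidef hA fun x hx ↦ ?_
  rw [smul_eq_mul, ← add_mul, mul_inv_cancel₀ (add_pos_of_nonneg_of_pos hx hs).ne']

end PosSemidef

end FunctionalCalculus

section CompletingTheSquare

variable {𝕜 m n : Type*} [RCLike 𝕜] [Fintype m] [Fintype n]

open scoped MatrixOrder in
theorem mul_eq_zero_of_mul_mul_conjTranspose_eq_zero {l : Type*} {A : Matrix n n 𝕜}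
    (hA : A.PosSemidef) {B : Matrix l n 𝕜} (hBAB : B * A * Bᴴ = 0) : A * Bᴴ = 0 := by
  classical
  obtain ⟨D, rfl⟩ := CStarAlgebra.nonneg_iff_eq_star_mul_self.1 hA.nonneg
  rw [star_eq_conjTranspose] at hBAB ⊢
  have hDB : D * Bᴴ = 0 := by
    rw [← conjTranspose_mul_self_eq_zero, conjTranspose_mul, conjTranspose_conjTranspose, ← hBAB]
    simp only [Matrix.mul_assoc]
  rw [Matrix.mul_assoc, hDB, Matrix.mul_zero]

theorem commute_of_mul_mul_eq_mul_mul {A B : Matrix n n 𝕜} (hA : A.IsHermitian)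
    (hB : B.IsHermitian) (hAB : A * A * B = A * B * A) : Commute A B := by
  set Z := A * B - B * A with hZ
  have hZ_conj : Zᴴ = -Z := by
    rw [hZ, conjTranspose_sub, conjTranspose_mul, conjTranspose_mul, hA.eq, hB.eq, neg_sub]
  have hAZ : A * Z = 0 := by
    rw [hZ, Matrix.mul_sub, ← Matrix.mul_assoc, ← Matrix.mul_assoc, hAB, sub_self]
  have hZA : Z * A = 0 := by
    simpa [hZ_conj, hA.eq] using congrArg conjTranspose hAZ
  have htrace : (Zᴴ * Z).trace = 0 := by
    calc (Zᴴ * Z).trace = (Z * B * A).trace - (Z * A * B).trace := by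
          rw [hZ_conj, ← trace_sub, Matrix.neg_mul, ← Matrix.mul_neg]
          simp only [hZ, neg_sub, Matrix.mul_sub, Matrix.mul_assoc]
      _ = 0 := by
          rw [hZA, Matrix.zero_mul, trace_mul_comm, ← Matrix.mul_assoc, hAZ, Matrix.zero_mul,
            sub_self]
  exact sub_eq_zero.1 (trace_conjTranspose_mul_self_eq_zero_iff.1 htrace)

variable [DecidableEq n] {M : Matrix m n 𝕜} {T C : Matrix n n 𝕜} {Y : Matrix m m 𝕜} {s : ℝ}

theorem mul_add_smul_eq_one_comm : T * C + s • C = 1 ↔ C * T + s • C = 1 := by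
  simpa [Matrix.add_mul, Matrix.mul_add] using mul_eq_one_comm (a := T + s • 1) (b := C)

theorem mul_residual_add_smul_residual_mul (hTC : T * C + s • C = 1)
    (hY : M * T * Mᴴ * Y + s • (Y * (M * Mᴴ)) = M * Mᴴ) :
    M * T * (Mᴴ * Y - C * Mᴴ) + s • ((Y * M - M * C) * Mᴴ) = 0 := by
  calc M * T * (Mᴴ * Y - C * Mᴴ) + s • ((Y * M - M * C) * Mᴴ)
      = (M * T * Mᴴ * Y + s • (Y * (M * Mᴴ))) - M * (T * C + s • C) * Mᴴ := by
        simp only [Matrix.mul_sub, Matrix.sub_mul, Matrix.mul_add, Matrix.add_mul,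
          Matrix.mul_smul, Matrix.smul_mul, smul_sub, Matrix.mul_assoc]
        abel
    _ = 0 := by rw [hY, hTC, Matrix.mul_one, sub_self]

theorem trace_sub_trace_eq_trace_add_trace (hC : C.IsHermitian) (hTC : T * C + s • C = 1)
    (hY : M * T * Mᴴ * Y + s • (Y * (M * Mᴴ)) = M * Mᴴ) :
    (M * C * Mᴴ).trace - (Y * (M * Mᴴ)).trace =
      ((Yᴴ * M - M * C) * T * (Yᴴ * M - M * C)ᴴ).trace +
        s • ((Y * M - M * C) * (Y * M - M * C)ᴴ).trace := by
  have hresidual := mul_residual_add_smul_residual_mul hTC hY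
  have hA_conj : (Y * M - M * C)ᴴ = Mᴴ * Yᴴ - C * Mᴴ := by simp [hC.eq]
  have hB_conj : (Yᴴ * M - M * C)ᴴ = Mᴴ * Y - C * Mᴴ := by simp [hC.eq]
  rw [hA_conj, hB_conj]
  set A := Y * M - M * C with hA
  set D := Mᴴ * Y - C * Mᴴ with hD
  have hY_part : (Yᴴ * M * T * D).trace + s • (A * (Mᴴ * Yᴴ)).trace = 0 := by
    rw [← Matrix.mul_assoc A, trace_mul_comm (A * Mᴴ), ← trace_smul, ← trace_add]
    simpa [Matrix.mul_add, ← Matrix.mul_assoc] using congrArg (fun X ↦ (Yᴴ * X).trace) hresidual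
  have hcross : (M * C * D).trace = (A * (C * Mᴴ)).trace := by
    rw [hA, hD, Matrix.mul_sub, Matrix.sub_mul, trace_sub, trace_sub, ← Matrix.mul_assoc,
      trace_mul_comm _ Y]
    simp only [Matrix.mul_assoc]
  have hC_part : (M * C * T * D).trace + s • (A * (C * Mᴴ)).trace = (M * D).trace := by
    rw [← hcross, ← trace_smul, ← trace_add, ← Matrix.smul_mul, ← Matrix.add_mul, Matrix.mul_assoc,
      ← Matrix.mul_smul, ← Matrix.mul_add, mul_add_smul_eq_one_comm.1 hTC, Matrix.mul_one]
  have hM_part : (M * D).trace = (Y * (M * Mᴴ)).trace - (M * C * Mᴴ).trace := by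
    rw [hD, Matrix.mul_sub, trace_sub, ← Matrix.mul_assoc, ← Matrix.mul_assoc, trace_mul_comm _ Y]
  calc (M * C * Mᴴ).trace - (Y * (M * Mᴴ)).trace
      = (Yᴴ * M * T * D).trace + s • (A * (Mᴴ * Yᴴ)).trace -
          ((M * C * T * D).trace + s • (A * (C * Mᴴ)).trace) := by
        rw [hY_part, hC_part, hM_part, zero_sub, neg_sub]
    _ = ((Yᴴ * M - M * C) * T * D).trace + s • (A * (Mᴴ * Yᴴ - C * Mᴴ)).trace := by
        simp only [Matrix.mul_sub A, Matrix.sub_mul _ _ T, Matrix.sub_mul _ _ D, trace_sub,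
          smul_sub]
        abel

theorem mul_comm_of_intertwines_resolvent (hT : T.IsHermitian) (hTC : T * C + s • C = 1)
    (hYM : Y * M = M * C) (hTY : T * (Mᴴ * Y) = T * (C * Mᴴ)) :
    M * T * Mᴴ * (M * Mᴴ) = M * Mᴴ * (M * T * Mᴴ) := by
  have hCT : C * T + s • C = 1 := mul_add_smul_eq_one_comm.1 hTC
  have hTCcomm : T * C = C * T := add_right_cancel (hTC.trans hCT.symm)
  have hgram : T * (Mᴴ * M) * C = C * T * (Mᴴ * M) := by
    calc T * (Mᴴ * M) * C = T * (Mᴴ * Y) * M := by simp only [Matrix.mul_assoc, hYM]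
      _ = C * T * (Mᴴ * M) := by rw [hTY, ← Matrix.mul_assoc, hTCcomm]; simp only [Matrix.mul_assoc]
  have hgram' : T * T * (Mᴴ * M) + s • (T * (Mᴴ * M)) =
      T * (Mᴴ * M) * T + s • (T * (Mᴴ * M)) := by
    calc T * T * (Mᴴ * M) + s • (T * (Mᴴ * M))
        = (T + s • 1) * (T * (Mᴴ * M) * (C * T + s • C)) := by
          rw [hCT]; simp [Matrix.add_mul, Matrix.mul_assoc]
      _ = (T + s • 1) * (T * (Mᴴ * M) * C) * (T + s • 1) := by
          simp [Matrix.mul_add, Matrix.mul_assoc]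
      _ = (T * C + s • C) * (T * (Mᴴ * M)) * (T + s • 1) := by
          rw [hgram]; simp [Matrix.add_mul, Matrix.mul_assoc]
      _ = T * (Mᴴ * M) * T + s • (T * (Mᴴ * M)) := by
          rw [hTC]; simp [Matrix.mul_add, Matrix.mul_assoc]
  have hcomm : T * (Mᴴ * M) = Mᴴ * M * T :=
    commute_of_mul_mul_eq_mul_mul hT (isHermitian_conjTranspose_mul_self M)
      (add_right_cancel hgram')
  calc M * T * Mᴴ * (M * Mᴴ) = M * (T * (Mᴴ * M)) * Mᴴ := by simp only [Matrix.mul_assoc]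
    _ = M * Mᴴ * (M * T * Mᴴ) := by rw [hcomm]; simp only [Matrix.mul_assoc]

theorem re_trace_mul_lt_re_trace_resolvent (hT : T.PosSemidef) (hC : C.IsHermitian) (hs : 0 < s)
    (hTC : T * C + s • C = 1) (hY : M * T * Mᴴ * Y + s • (Y * (M * Mᴴ)) = M * Mᴴ)
    (hcomm : M * T * Mᴴ * (M * Mᴴ) ≠ M * Mᴴ * (M * T * Mᴴ)) :
    RCLike.re (Y * (M * Mᴴ)).trace < RCLike.re (M * C * Mᴴ).trace := by
  have hgap := trace_sub_trace_eq_trace_add_trace hC hTC hY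
  set A := Y * M - M * C
  set B := Yᴴ * M - M * C with hB
  have hBTB : (B * T * Bᴴ).PosSemidef := hT.mul_mul_conjTranspose_same B
  have hAA : (A * Aᴴ).PosSemidef := posSemidef_self_mul_conjTranspose A
  have hsAA : 0 ≤ s • (A * Aᴴ).trace := smul_nonneg hs.le hAA.trace_nonneg
  have hgap_nonneg : 0 ≤ (M * C * Mᴴ).trace - (Y * (M * Mᴴ)).trace :=
    hgap ▸ add_nonneg hBTB.trace_nonneg hsAA
  have hgap_ne : (M * C * Mᴴ).trace - (Y * (M * Mᴴ)).trace ≠ 0 := by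
    rw [hgap, Ne, add_eq_zero_iff_of_nonneg hBTB.trace_nonneg hsAA, smul_eq_zero_iff_right hs.ne',
      hBTB.trace_eq_zero_iff, trace_mul_conjTranspose_self_eq_zero_iff]
    rintro ⟨hBTB_zero, hA_zero⟩
    have hTB : T * (Mᴴ * Y - C * Mᴴ) = 0 := by
      simpa [hB, hC.eq] using mul_eq_zero_of_mul_mul_conjTranspose_eq_zero hT hBTB_zero
    rw [Matrix.mul_sub, sub_eq_zero] at hTB
    exact hcomm <|
      mul_comm_of_intertwines_resolvent hT.isHermitian hTC (sub_eq_zero.1 hA_zero) hTB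
  rw [← sub_pos, ← map_sub]
  exact (RCLike.pos_iff.1 (hgap_nonneg.lt_of_ne' hgap_ne)).1

end CompletingTheSquare

section Sylvester

variable {𝕜 n : Type*} [RCLike 𝕜] [Fintype n] {ρ σ : Matrix n n 𝕜}

theorem sylvester_eq_iff_eigenbasisCoords [DecidableEq n] (hρ : ρ.IsHermitian)
    (hσ : σ.IsHermitian) {Y : Matrix n n 𝕜} {s : ℝ} :
    ρ * Y + s • (Y * σ) = σ ↔ ∀ i j,
      ((hρ.eigenvalues i + s * hσ.eigenvalues j : ℝ) : 𝕜) * eigenbasisCoords hρ hσ Y i j =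
        hσ.eigenvalues j * eigenbasisCoords hρ hσ 1 i j := by
  have hright (i j) : eigenbasisCoords hρ hσ σ i j =
      hσ.eigenvalues j * eigenbasisCoords hρ hσ 1 i j := by
    rw [mul_comm, ← eigenbasisCoords_mul_right, Matrix.one_mul]
  have hleft (i j) : eigenbasisCoords hρ hσ (ρ * Y + s • (Y * σ)) i j =
      ((hρ.eigenvalues i + s * hσ.eigenvalues j : ℝ) : 𝕜) * eigenbasisCoords hρ hσ Y i j := by
    rw [eigenbasisCoords_add, Matrix.add_apply, eigenbasisCoords_smul, Matrix.smul_apply,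
      eigenbasisCoords_mul_left, eigenbasisCoords_mul_right, RCLike.real_smul_eq_coe_mul]
    push_cast
    ring
  rw [← (eigenbasisCoords_bijective hρ hσ).injective.eq_iff, ← Matrix.ext_iff]
  simp only [hleft, hright]

theorem exists_sylvester_eq (hρ : ρ.PosSemidef) (hσ : σ.PosSemidef) {s : ℝ} (hs : 0 < s) :
    ∃ Y : Matrix n n 𝕜, ρ * Y + s • (Y * σ) = σ := by
  classical
  have hρ' := hρ.isHermitian
  have hσ' := hσ.isHermitian
  obtain ⟨Y, hY⟩ := (eigenbasisCoords_bijective hρ' hσ').surjective <| of fun i j ↦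
    ((hσ'.eigenvalues j / (hρ'.eigenvalues i + s * hσ'.eigenvalues j) : ℝ) : 𝕜) *
      eigenbasisCoords hρ' hσ' 1 i j
  refine ⟨Y, (sylvester_eq_iff_eigenbasisCoords hρ' hσ').2 fun i j ↦ ?_⟩
  rw [hY, of_apply, ← mul_assoc, ← RCLike.ofReal_mul]
  rcases (hσ.eigenvalues_nonneg j).eq_or_lt with hq | hq
  · rw [← hq, zero_div, mul_zero]
  · have hden := add_pos_of_nonneg_of_pos (hρ.eigenvalues_nonneg i) (mul_pos hs hq)
    rw [mul_div_cancel₀ _ hden.ne']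

end Sylvester

section Divergences

variable {𝕜 n : Type*} [RCLike 𝕜] [Fintype n] [DecidableEq n] {ρ σ : Matrix n n 𝕜}

/-- The standard (Petz) `f`-divergence of `ρ` and `σ`, as the classical `f`-divergence of their
Nussbaum–Szkoła distributions `rᵢ |⟨eᵢ, uⱼ⟩|²` and `qⱼ |⟨eᵢ, uⱼ⟩|²`. The terms with `qⱼ = 0` vanish,
which is the right value as long as the support of `ρ` is contained in that of `σ`. -/
noncomputable def standardDivergence (f : ℝ → ℝ) (hρ : ρ.IsHermitian) (hσ : σ.IsHermitian) : ℝ :=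
  ∑ p : n × n, hσ.eigenvalues p.2 * eigenbasisOverlap hρ hσ p.1 p.2 *
    f (hρ.eigenvalues p.1 / hσ.eigenvalues p.2)

theorem standardDivergence_one (hρ : ρ.IsHermitian) (hσ : σ.IsHermitian) :
    standardDivergence (fun _ ↦ 1) hρ hσ = RCLike.re σ.trace := by
  have hsum := re_trace_cfc_mul_cfc hρ hσ (fun _ ↦ 1) id
  rw [cfc_const_one ℝ ρ hρ.isSelfAdjoint, cfc_id ℝ σ hσ.isSelfAdjoint, Matrix.one_mul] at hsum
  simp only [hsum, standardDivergence, id, one_mul, mul_one]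

theorem standardDivergence_id (hρ : ρ.IsHermitian) (hσ : σ.IsHermitian)
    (hρσ : ρ * supportProjection σ = ρ) :
    standardDivergence id hρ hσ = RCLike.re ρ.trace := by
  have hsum := re_trace_cfc_mul_cfc hρ hσ id (fun _ ↦ 1)
  rw [cfc_const_one ℝ σ hσ.isSelfAdjoint, cfc_id ℝ ρ hρ.isSelfAdjoint, Matrix.mul_one] at hsum
  rw [hsum, standardDivergence]
  refine Finset.sum_congr rfl fun p _ ↦ ?_
  rw [id, id, mul_one]
  by_cases hq : hσ.eigenvalues p.2 = 0
  · rw [eigenvalue_mul_eigenbasisOverlap_eq_zero hρ hσ hρσ hq, hq, zero_mul, zero_mul]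
  · field_simp

theorem standardDivergence_mul_log (hρ : ρ.IsHermitian) (hσ : σ.IsHermitian)
    (hρσ : ρ * supportProjection σ = ρ) :
    standardDivergence (fun x ↦ x * Real.log x) hρ hσ =
      RCLike.re (ρ * (cfc Real.log ρ - cfc Real.log σ)).trace := by
  have hsumρ := re_trace_cfc_mul_cfc hρ hσ (fun x ↦ x * Real.log x) (fun _ ↦ 1)
  rw [cfc_const_one ℝ σ hσ.isSelfAdjoint, Matrix.mul_one, ← self_mul_cfc hρ] at hsumρ
  have hsumσ := re_trace_cfc_mul_cfc hρ hσ id Real.log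
  rw [cfc_id ℝ ρ hρ.isSelfAdjoint] at hsumσ
  rw [Matrix.mul_sub, trace_sub, map_sub, hsumρ, hsumσ, ← Finset.sum_sub_distrib,
    standardDivergence]
  refine Finset.sum_congr rfl fun p _ ↦ ?_
  set r := hρ.eigenvalues p.1
  set w := eigenbasisOverlap hρ hσ p.1 p.2
  by_cases hq : hσ.eigenvalues p.2 = 0
  · have hrw : r * w = 0 := eigenvalue_mul_eigenbasisOverlap_eq_zero hρ hσ hρσ hq p.1
    rw [hq, id]
    linear_combination (Real.log 0 - Real.log r) * hrw
  · by_cases hr : r = 0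
    · simp [hr]
    · rw [Real.log_div hr hq, id]
      field_simp

theorem re_trace_mul_eq_standardDivergence (hρ : ρ.PosSemidef) (hσ : σ.PosSemidef) {s : ℝ}
    (hs : 0 < s) {Y : Matrix n n 𝕜} (hY : ρ * Y + s • (Y * σ) = σ) :
    RCLike.re (Y * σ).trace =
      standardDivergence (fun x ↦ (x + s)⁻¹) hρ.isHermitian hσ.isHermitian := by
  have hρ' := hρ.isHermitian
  have hσ' := hσ.isHermitian
  have hYσ (i j) : eigenbasisCoords hρ' hσ' (Y * σ) i j =
      ((hσ'.eigenvalues j * (hρ'.eigenvalues i / hσ'.eigenvalues j + s)⁻¹ : ℝ) : 𝕜) *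
        eigenbasisCoords hρ' hσ' 1 i j := by
    rw [eigenbasisCoords_mul_right]
    rcases (hσ.eigenvalues_nonneg j).eq_or_lt with hq | hq
    · rw [← hq, zero_mul, RCLike.ofReal_zero, mul_zero, zero_mul]
    · have hratio : 0 < hρ'.eigenvalues i / hσ'.eigenvalues j + s :=
        add_pos_of_nonneg_of_pos (div_nonneg (hρ.eigenvalues_nonneg i) hq.le) hs
      have hden : hρ'.eigenvalues i + s * hσ'.eigenvalues j =
          (hρ'.eigenvalues i / hσ'.eigenvalues j + s) * hσ'.eigenvalues j := by
        rw [add_mul, div_mul_cancel₀ _ hq.ne']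
      have hcoord := (sylvester_eq_iff_eigenbasisCoords hρ' hσ').1 hY i j
      rw [hden, RCLike.ofReal_mul, mul_assoc] at hcoord
      rw [RCLike.ofReal_mul, RCLike.ofReal_inv, mul_right_comm, ← hcoord, mul_comm _ (_)⁻¹,
        inv_mul_cancel_left₀ (RCLike.ofReal_ne_zero.2 hratio.ne'), mul_comm]
  rw [re_trace_eq_sum_mul_eigenbasisOverlap _ _ hYσ, standardDivergence]
  exact Finset.sum_congr rfl fun p _ ↦ mul_right_comm _ _ _

/-- The noncommutative Radon–Nikodym derivative `σ^{-1/2} ρ σ^{-1/2}`, with the Moore–Penrose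
convention for `σ^{-1/2}`. -/
noncomputable def radonNikodym (ρ σ : Matrix n n 𝕜) : Matrix n n 𝕜 :=
  cfc (fun x ↦ (√x)⁻¹) σ * ρ * cfc (fun x ↦ (√x)⁻¹) σ

theorem posSemidef_radonNikodym (hρ : ρ.PosSemidef) (σ : Matrix n n 𝕜) :
    (radonNikodym ρ σ).PosSemidef := by
  simpa only [radonNikodym, (isHermitian_cfc _ _).eq] using
    hρ.mul_mul_conjTranspose_same (cfc (fun x ↦ (√x)⁻¹) σ)

theorem cfc_sqrt_mul_radonNikodym_mul_cfc_sqrt (hρ : ρ.IsHermitian) (hσ : σ.PosSemidef)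
    (hρσ : ρ * supportProjection σ = ρ) :
    cfc Real.sqrt σ * radonNikodym ρ σ * cfc Real.sqrt σ = ρ := by
  have hσρ : supportProjection σ * ρ = ρ := by
    simpa [hρ.eq, (isHermitian_cfc _ σ).eq, supportProjection] using congrArg conjTranspose hρσ
  have hcomm := cfc_commute_cfc (R := ℝ) (fun x ↦ (√x)⁻¹) Real.sqrt σ
  calc cfc Real.sqrt σ * radonNikodym ρ σ * cfc Real.sqrt σ
      = (cfc Real.sqrt σ * cfc (fun x ↦ (√x)⁻¹) σ) * ρ *
          (cfc (fun x ↦ (√x)⁻¹) σ * cfc Real.sqrt σ) := by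
        simp only [radonNikodym, Matrix.mul_assoc]
    _ = ρ := by rw [hcomm.eq, cfc_sqrt_mul_cfc_inv_sqrt hσ, hσρ, hρσ]

/-- The maximal (Matsumoto) `f`-divergence `Tr σ f(σ^{-1/2} ρ σ^{-1/2})`. -/
noncomputable def maximalDivergence (f : ℝ → ℝ) (ρ σ : Matrix n n 𝕜) : ℝ :=
  RCLike.re (σ * cfc f (radonNikodym ρ σ)).trace

theorem maximalDivergence_eq_sum (f : ℝ → ℝ) (hT : (radonNikodym ρ σ).IsHermitian)
    (hσ : σ.IsHermitian) :
    maximalDivergence f ρ σ = ∑ p : n × n,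
      hσ.eigenvalues p.2 * eigenbasisOverlap hT hσ p.1 p.2 * f (hT.eigenvalues p.1) := by
  have hsum := re_trace_cfc_mul_cfc hT hσ f id
  rw [cfc_id ℝ σ hσ.isSelfAdjoint, trace_mul_comm] at hsum
  rw [maximalDivergence, hsum]
  exact Finset.sum_congr rfl fun p _ ↦ by rw [id, mul_rotate]

theorem maximalDivergence_one (hρ : ρ.PosSemidef) (σ : Matrix n n 𝕜) :
    maximalDivergence (fun _ ↦ 1) ρ σ = RCLike.re σ.trace := by
  rw [maximalDivergence, cfc_const_one ℝ _ (posSemidef_radonNikodym hρ σ).isHermitian.isSelfAdjoint,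
    Matrix.mul_one]

theorem maximalDivergence_id (hρ : ρ.PosSemidef) (hσ : σ.PosSemidef)
    (hρσ : ρ * supportProjection σ = ρ) :
    maximalDivergence id ρ σ = RCLike.re ρ.trace := by
  rw [maximalDivergence, cfc_id ℝ _ (posSemidef_radonNikodym hρ σ).isHermitian.isSelfAdjoint,
    radonNikodym, ← Matrix.mul_assoc, trace_mul_comm, ← Matrix.mul_assoc, ← Matrix.mul_assoc,
    cfc_inv_sqrt_mul_self_mul_cfc_inv_sqrt hσ, trace_mul_comm, hρσ]

theorem maximalDivergence_mul (f : ℝ → ℝ) (hρ : ρ.PosSemidef) (hσ : σ.PosSemidef)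
    (hker : ∀ v : n → 𝕜, σ *ᵥ v = 0 → ρ *ᵥ v = 0) :
    maximalDivergence (fun x ↦ x * f x) ρ σ =
      RCLike.re (ρ * cfc f
        (cfc Real.sqrt ρ * cfc (fun x : ℝ ↦ x⁻¹) σ * cfc Real.sqrt ρ)).trace := by
  set G := cfc (fun x ↦ (√x)⁻¹) σ
  set R := cfc Real.sqrt ρ
  have hG : Gᴴ = G := (isHermitian_cfc _ σ).eq
  have hR : Rᴴ = R := (isHermitian_cfc _ ρ).eq
  have hRσ : R * supportProjection σ = R :=
    mul_supportProjection_of_ker_le hσ.isHermitian fun v hv ↦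
      cfc_sqrt_mulVec_eq_zero hρ (hker v hv)
  have hinner : (G * R)ᴴ * (G * R) = R * cfc (fun x : ℝ ↦ x⁻¹) σ * R := by
    rw [conjTranspose_mul, hG, hR, ← cfc_inv_sqrt_mul_cfc_inv_sqrt hσ]
    simp only [G, Matrix.mul_assoc]
  have houter : G * R * (G * R)ᴴ = radonNikodym ρ σ := by
    rw [conjTranspose_mul, hG, hR, radonNikodym, ← cfc_sqrt_mul_cfc_sqrt hρ]
    simp only [G, R, Matrix.mul_assoc]
  have hσ_conj : (G * R)ᴴ * σ * (G * R) = ρ := by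
    calc (G * R)ᴴ * σ * (G * R) = R * (G * σ * G) * R := by
          simp only [conjTranspose_mul, hG, hR, Matrix.mul_assoc]
      _ = ρ := by
          rw [cfc_inv_sqrt_mul_self_mul_cfc_inv_sqrt hσ, hRσ, cfc_sqrt_mul_cfc_sqrt hρ]
  have htrace := trace_conjTranspose_mul_mul_mul_cfc (G * R) σ f
  rw [hinner, houter, hσ_conj] at htrace
  rw [maximalDivergence, htrace]

theorem standardDivergence_inv_add_lt_maximalDivergence (hρ : ρ.PosSemidef) (hσ : σ.PosSemidef)
    (hρσ : ρ * supportProjection σ = ρ) (hcomm : ρ * σ ≠ σ * ρ) {s : ℝ} (hs : 0 < s) :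
    standardDivergence (fun x ↦ (x + s)⁻¹) hρ.isHermitian hσ.isHermitian <
      maximalDivergence (fun x ↦ (x + s)⁻¹) ρ σ := by
  have hT := posSemidef_radonNikodym hρ σ
  have hTC := self_mul_cfc_inv_add_add_smul hT hs
  have hS : (cfc Real.sqrt σ)ᴴ = cfc Real.sqrt σ := (isHermitian_cfc _ σ).eq
  have hSS : cfc Real.sqrt σ * (cfc Real.sqrt σ)ᴴ = σ := by rw [hS, cfc_sqrt_mul_cfc_sqrt hσ]
  have hSTS : cfc Real.sqrt σ * radonNikodym ρ σ * (cfc Real.sqrt σ)ᴴ = ρ := by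
    rw [hS, cfc_sqrt_mul_radonNikodym_mul_cfc_sqrt hρ.isHermitian hσ hρσ]
  obtain ⟨Y, hY⟩ := exists_sylvester_eq hρ hσ hs
  have hlt := re_trace_mul_lt_re_trace_resolvent (M := cfc Real.sqrt σ) (Y := Y) hT
    (isHermitian_cfc _ _) hs hTC (by rwa [hSS, hSTS]) (by rwa [hSS, hSTS])
  rwa [hSS, re_trace_mul_eq_standardDivergence hρ hσ hs hY, Matrix.mul_assoc, trace_mul_comm,
    Matrix.mul_assoc, hS, cfc_sqrt_mul_cfc_sqrt hσ, trace_mul_comm] at hlt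

theorem standardDivergence_mul_log_lt_maximalDivergence (hρ : ρ.PosSemidef) (hσ : σ.PosSemidef)
    (hρσ : ρ * supportProjection σ = ρ) (hcomm : ρ * σ ≠ σ * ρ) :
    standardDivergence (fun x ↦ x * Real.log x) hρ.isHermitian hσ.isHermitian <
      maximalDivergence (fun x ↦ x * Real.log x) ρ σ := by
  have hT := posSemidef_radonNikodym hρ σ
  have hone := (standardDivergence_one hρ.isHermitian hσ.isHermitian).trans
    (maximalDivergence_one hρ σ).symm
  have hid := (standardDivergence_id hρ.isHermitian hσ.isHermitian hρσ).trans
    (maximalDivergence_id hρ hσ hρσ).symm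
  have hinv {s : ℝ} (hs : 0 < s) :=
    standardDivergence_inv_add_lt_maximalDivergence hρ hσ hρσ hcomm hs
  simp only [maximalDivergence_eq_sum _ hT.isHermitian hσ.isHermitian, standardDivergence, mul_one,
    id] at hone hid hinv ⊢
  exact sum_mul_mul_log_lt
    (fun p ↦ div_nonneg (hρ.eigenvalues_nonneg p.1) (hσ.eigenvalues_nonneg p.2))
    (fun p ↦ hT.eigenvalues_nonneg p.1) hone hid fun s hs ↦ hinv hs

end Divergences

theorem stmt17_general {𝕜 n : Type*} [RCLike 𝕜] [Fintype n] [DecidableEq n] {ρ σ : Matrix n n 𝕜}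
    (hρ : ρ.PosSemidef) (hσ : σ.PosSemidef) (hsupp : ∀ v : n → 𝕜, σ *ᵥ v = 0 → ρ *ᵥ v = 0)
    (hcomm : ρ * σ ≠ σ * ρ) :
    RCLike.re (ρ * (cfc Real.log ρ - cfc Real.log σ)).trace <
      RCLike.re (ρ * cfc Real.log
        (cfc Real.sqrt ρ * cfc (fun x : ℝ ↦ x⁻¹) σ * cfc Real.sqrt ρ)).trace := by
  have hρσ : ρ * supportProjection σ = ρ := mul_supportProjection_of_ker_le hσ.isHermitian hsupp
  rw [← standardDivergence_mul_log hρ.isHermitian hσ.isHermitian hρσ,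
    ← maximalDivergence_mul Real.log hρ hσ hsupp]
  exact standardDivergence_mul_log_lt_maximalDivergence hρ hσ hρσ hcomm

theorem mpow_one_half {n : ℕ} (A : Matrix (Fin n) (Fin n) ℂ) :
    mpow A (1 / 2) = cfc Real.sqrt A := by
  rw [mpow]
  congr with x
  split_ifs with hx
  · rw [hx, Real.sqrt_zero]
  · rw [Real.sqrt_eq_rpow]

theorem mpow_neg_one {n : ℕ} (A : Matrix (Fin n) (Fin n) ℂ) :
    mpow A (-1) = cfc (fun x : ℝ ↦ x⁻¹) A := by
  rw [mpow]
  congr with x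
  split_ifs with hx
  · rw [hx, _root_.inv_zero]
  · rw [Real.rpow_neg_one]

/-- for positive semidefinite non-commuting `ρ, σ` with
`supp ρ ⊆ supp σ`, the Umegaki relative entropy is strictly smaller than the
Belavkin–Staszewski relative entropy:
`Tr(ρ(log ρ − log σ)) < Tr(ρ · log(ρ^{1/2} σ⁻¹ ρ^{1/2}))`. -/
theorem stmt17 {n : ℕ} (ρ σ : Matrix (Fin n) (Fin n) ℂ)
    (hρ : ρ.PosSemidef) (hσ : σ.PosSemidef)
    (hsupp : ∀ v : Fin n → ℂ, σ *ᵥ v = 0 → ρ *ᵥ v = 0)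
    (hcomm : ρ * σ ≠ σ * ρ) :
    (Matrix.trace (ρ * (mlog ρ - mlog σ))).re
      < (Matrix.trace (ρ * mlog (mpow ρ (1/2) * mpow σ (-1) * mpow ρ (1/2)))).re := by
  rw [mpow_one_half, mpow_neg_one]
  exact stmt17_general hρ hσ hsupp hcomm
end

section
/- Let ρ, σ ∈ M_n(ℂ) be positive semidefinite with supp ρ ⊆ supp σ and ρσ ≠ σρ, and let α ∈ (1,2). Then Tr( ρ^α σ^{1−α} ) < Tr( σ^{1/2} ( σ^{−1/2} ρ σ^{−1/2} )^α σ^{1/2} ), where positive powers of positive semidefinite matrices are taken by the spectral calculus with 0^t := 0, and the negative power σ^{1−α} as well as σ^{−1/2} are taken in the Moore–Penrose sense (inverting only the nonzero eigenvalues). -/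
open Matrix
open scoped ComplexOrder

/-! The power `x ^ α` with `1 < α < 2` is a positive mixture of the functions `x ^ 2 / (x + s)`,
`0 < s`, so it is enough to compare both sides with `x ^ α` replaced by one such function. The
form `Y ↦ 2 re tr (ρ Y) - re tr (ρ Y Yᴴ) - s re tr (σ Yᴴ Y)` is linear in `(ρ, σ)`. At a suitable
double operator integral `Y` of `ρ` and `σ` it equals the left-hand side. On the other hand, put
`S = σ ^ (1/2)` and `X = σ ^ (-1/2) ρ σ ^ (-1/2)`, so that `ρ = S X S` and `σ = S S`. Expanding
along an eigenbasis `v i` of `X` with eigenvalues `x i` splits the form into contributions of the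
vectors `a i = S (v i)`, and completing squares bounds each by
`‖a i‖ ^ 2 * (x i ^ 2 / (x i + s))`, the corresponding summand of the right-hand side. If all
these bounds were equalities, every `a i` would be an eigenvector of `Y` and (when `x i ≠ 0`) of
`Yᴴ` with eigenvalue `x i / (x i + s)`, so `a i` and `a j` would be orthogonal whenever
`x i ≠ x j`. Then `X` would commute with `S S = σ`, and so would `ρ = S X S`. -/

section IntegralRepresentation

open MeasureTheory Set

variable {ι κ : Type*} [Fintype ι] [Fintype κ] {α : ℝ}

lemma rpowIntegrand₁₂_eq_rpow_mul_sq_div (hα : α ∈ Ioo 1 2) {t x : ℝ} (ht : 0 < t) (hx : 0 ≤ x) :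
    Real.rpowIntegrand₁₂ α t x = t ^ (α - 2) * (x ^ 2 / (x + t)) := by
  have hα' : α - 1 ∈ Ioo (0 : ℝ) 1 := ⟨by linarith [hα.1], by linarith [hα.2]⟩
  rw [Real.rpowIntegrand₁₂_eq_mul_rpowIntegrand₀₁ hx ht,
    Real.rpowIntegrand₀₁_eq_pow_div hα' ht.le hx, sub_sub, one_add_one_eq_two, add_comm t x]
  ring

lemma integral_Ioi_pos {f : ℝ → ℝ} {a : ℝ} (hf : IntegrableOn f (Ioi a))
    (hpos : ∀ t ∈ Ioi a, 0 < f t) : 0 < ∫ t in Ioi a, f t := by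
  have hnonneg : 0 ≤ᵐ[volume.restrict (Ioi a)] f :=
    (ae_restrict_mem measurableSet_Ioi).mono fun t ht ↦ (hpos t ht).le
  have hsupp : Ioi a ⊆ Function.support f ∩ Ioi a := fun t ht ↦ ⟨(hpos t ht).ne', ht⟩
  rw [setIntegral_pos_iff_support_of_nonneg_ae hnonneg hf]
  exact lt_of_lt_of_le (by simp) (measure_mono hsupp)

lemma sum_mul_rpow_pos_of_sum_mul_sq_div_pos (hα : α ∈ Ioo 1 2) {c x : ι → ℝ} (hx : ∀ i, 0 ≤ x i)
    (h : ∀ t, 0 < t → 0 < ∑ i, c i * (x i ^ 2 / (x i + t))) : 0 < ∑ i, c i * x i ^ α := by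
  have hα' : α - 1 ∈ Ioo (0 : ℝ) 1 := ⟨by linarith [hα.1], by linarith [hα.2]⟩
  have hint (i : ι) : IntegrableOn (fun t ↦ c i * Real.rpowIntegrand₁₂ α t (x i)) (Ioi 0) :=
    (Real.integrableOn_rpowIntegrand₁₂ hα (hx i)).const_mul _
  have hsum : ∑ i, c i * x i ^ α = (∫ t in Ioi 0, Real.rpowIntegrand₀₁ (α - 1) t 1)⁻¹ *
      ∫ t in Ioi 0, ∑ i, c i * Real.rpowIntegrand₁₂ α t (x i) := by
    rw [integral_finsetSum _ fun i _ ↦ hint i, Finset.mul_sum]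
    refine Finset.sum_congr rfl fun i _ ↦ ?_
    rw [Real.rpow_eq_const_mul_integral_rpowIntegrand₁₂ hα (hx i), integral_const_mul]
    ring
  rw [hsum]
  refine mul_pos (inv_pos.mpr (Real.integral_rpowIntegrand₀₁_one_pos hα'))
    (integral_Ioi_pos (integrable_finsetSum _ fun i _ ↦ hint i) fun t (ht : 0 < t) ↦ ?_)
  have hfactor : ∑ i, c i * Real.rpowIntegrand₁₂ α t (x i) =
      t ^ (α - 2) * ∑ i, c i * (x i ^ 2 / (x i + t)) := by
    rw [Finset.mul_sum]
    refine Finset.sum_congr rfl fun i _ ↦ ?_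
    rw [rpowIntegrand₁₂_eq_rpow_mul_sq_div hα ht (hx i), mul_left_comm]
  rw [hfactor]
  exact mul_pos (Real.rpow_pos_of_pos ht _) (h t ht)

lemma sum_mul_rpow_lt_of_sum_mul_sq_div_lt (hα : α ∈ Ioo 1 2) {p x : ι → ℝ} {q y : κ → ℝ}
    (hx : ∀ i, 0 ≤ x i) (hy : ∀ k, 0 ≤ y k)
    (h : ∀ t, 0 < t → ∑ i, p i * (x i ^ 2 / (x i + t)) < ∑ k, q k * (y k ^ 2 / (y k + t))) :
    ∑ i, p i * x i ^ α < ∑ k, q k * y k ^ α := by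
  have key := sum_mul_rpow_pos_of_sum_mul_sq_div_pos hα (c := Sum.elim q (-p)) (x := Sum.elim y x)
    (by simpa using ⟨hy, hx⟩) fun t ht ↦ by simpa using h t ht
  simpa using key

end IntegralRepresentation

section HilbertSpace

variable {𝕜 E κ : Type*} [RCLike 𝕜] [NormedAddCommGroup E] [InnerProductSpace 𝕜 E]

lemma mul_norm_sub_sq_add_mul_norm_sub_sq {a b c : E} {x s : ℝ} (hxs : x + s ≠ 0)
    (h : RCLike.re (inner 𝕜 a b) = RCLike.re (inner 𝕜 a c)) :
    x * ‖b - ((x / (x + s) : ℝ) : 𝕜) • a‖ ^ 2 + s * ‖c - ((x / (x + s) : ℝ) : 𝕜) • a‖ ^ 2 =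
      ‖a‖ ^ 2 * (x ^ 2 / (x + s)) -
        (2 * x * RCLike.re (inner 𝕜 a c) - x * ‖b‖ ^ 2 - s * ‖c‖ ^ 2) := by
  have hsq (v : E) : ‖v - ((x / (x + s) : ℝ) : 𝕜) • a‖ ^ 2 =
      ‖v‖ ^ 2 - 2 * (x / (x + s) * RCLike.re (inner 𝕜 a v)) + (x / (x + s)) ^ 2 * ‖a‖ ^ 2 := by
    rw [norm_sub_sq (𝕜 := 𝕜), inner_smul_right, RCLike.re_ofReal_mul, inner_re_symm, norm_smul,
      mul_pow, RCLike.norm_ofReal, sq_abs]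
  rw [hsq, hsq, h]
  field_simp
  ring

variable [CompleteSpace E]

lemma re_inner_apply_adjoint_apply (T : E →L[𝕜] E) (a : E) :
    RCLike.re (inner 𝕜 a (T (T.adjoint a))) = ‖T.adjoint a‖ ^ 2 := by
  rw [← T.adjoint_inner_left, inner_self_eq_norm_sq]

/-- The contribution of the pair of rank-one operators `x • |a⟩⟨a|` and `|a⟩⟨a|` to
`variationalForm` at the operator `T`. -/
noncomputable def rankOneForm (T : E →L[𝕜] E) (x s : ℝ) (a : E) : ℝ :=
  2 * x * RCLike.re (inner 𝕜 a (T a)) - x * ‖T.adjoint a‖ ^ 2 - s * ‖T a‖ ^ 2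

variable (T : E →L[𝕜] E) {x s : ℝ}

lemma norm_sq_mul_sub_rankOneForm (hxs : x + s ≠ 0) (a : E) :
    ‖a‖ ^ 2 * (x ^ 2 / (x + s)) - rankOneForm T x s a =
      x * ‖T.adjoint a - ((x / (x + s) : ℝ) : 𝕜) • a‖ ^ 2 +
        s * ‖T a - ((x / (x + s) : ℝ) : 𝕜) • a‖ ^ 2 :=
  (mul_norm_sub_sq_add_mul_norm_sub_sq hxs <| by
    rw [T.adjoint_inner_right, inner_re_symm]).symm

lemma rankOneForm_le (hx : 0 ≤ x) (hs : 0 < s) (a : E) :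
    rankOneForm T x s a ≤ ‖a‖ ^ 2 * (x ^ 2 / (x + s)) := by
  rw [← sub_nonneg, norm_sq_mul_sub_rankOneForm T (by positivity)]
  positivity

variable {T}

lemma rankOneForm_eq_iff (hx : 0 ≤ x) (hs : 0 < s) {a : E} :
    rankOneForm T x s a = ‖a‖ ^ 2 * (x ^ 2 / (x + s)) ↔
      (x = 0 ∨ T.adjoint a = ((x / (x + s) : ℝ) : 𝕜) • a) ∧
        T a = ((x / (x + s) : ℝ) : 𝕜) • a := by
  rw [eq_comm, ← sub_eq_zero, norm_sq_mul_sub_rankOneForm T (by positivity),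
    add_eq_zero_iff_of_nonneg (by positivity) (by positivity)]
  simp [hs.ne', sub_eq_zero]

lemma inner_eq_zero_of_rankOneForm_eq {y : ℝ} {a b : E} (hx : 0 < x) (hy : 0 ≤ y) (hs : 0 < s)
    (hxy : x ≠ y) (ha : rankOneForm T x s a = ‖a‖ ^ 2 * (x ^ 2 / (x + s)))
    (hb : rankOneForm T y s b = ‖b‖ ^ 2 * (y ^ 2 / (y + s))) : inner 𝕜 a b = 0 := by
  -- `a` is an eigenvector of `T†` and `b` one of `T`, with different eigenvalues.
  have hTa := ((rankOneForm_eq_iff hx.le hs).mp ha).1.resolve_left hx.ne'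
  have hTb := ((rankOneForm_eq_iff hy hs).mp hb).2
  have heigen : x / (x + s) ≠ y / (y + s) := by
    rw [Ne, div_eq_div_iff (by positivity) (by positivity)]
    exact fun h ↦ hxy (mul_right_cancel₀ hs.ne' (by linarith))
  have hadj := T.adjoint_inner_left b a
  rw [hTa, hTb, inner_smul_left, inner_smul_right, RCLike.conj_ofReal] at hadj
  by_contra hab
  exact heigen (RCLike.ofReal_injective (mul_right_cancel₀ hab hadj))

lemma sum_rankOneForm_lt [Fintype κ] (T : E →L[𝕜] E) {a : κ → E} {x : κ → ℝ}
    (hx : ∀ k, 0 ≤ x k) (hs : 0 < s) {i j : κ} (hij : x i ≠ x j)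
    (hinner : inner 𝕜 (a i) (a j) ≠ 0) :
    ∑ k, rankOneForm T (x k) s (a k) < ∑ k, ‖a k‖ ^ 2 * (x k ^ 2 / (x k + s)) := by
  wlog hlt : x i < x j generalizing i j
  · exact this hij.symm (mt inner_eq_zero_symm.mp hinner) (hij.lt_or_gt.resolve_left hlt)
  have hle (k : κ) := rankOneForm_le T (hx k) hs (a k)
  refine (Finset.sum_le_sum fun k _ ↦ hle k).lt_of_ne fun heq ↦ hinner ?_
  have heq' (k : κ) := (Finset.sum_eq_sum_iff_of_le fun k _ ↦ hle k).mp heq k (Finset.mem_univ k)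
  exact inner_eq_zero_symm.mp <|
    inner_eq_zero_of_rankOneForm_eq ((hx i).trans_lt hlt) (hx i) hs hlt.ne' (heq' j) (heq' i)

end HilbertSpace

section Hermitian

variable {𝕜 ι : Type*} [RCLike 𝕜] [Fintype ι] [DecidableEq ι] {A : Matrix ι ι 𝕜}

lemma cfc_eq_eigenvectorUnitary_mul (hA : A.IsHermitian) (f : ℝ → ℝ) :
    cfc f A = hA.eigenvectorUnitary.1 * diagonal (fun i ↦ (f (hA.eigenvalues i) : 𝕜)) *
      hA.eigenvectorUnitary.1ᴴ :=
  hA.cfc_eq f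

lemma continuousOn_spectrum (A : Matrix ι ι 𝕜) (f : ℝ → ℝ) : ContinuousOn f (spectrum ℝ A) :=
  A.finite_real_spectrum.continuousOn f

lemma toEuclideanCLM_eigenvectorBasis (hA : A.IsHermitian) (i : ι) :
    toEuclideanCLM (𝕜 := 𝕜) A (hA.eigenvectorBasis i) =
      (hA.eigenvalues i : 𝕜) • hA.eigenvectorBasis i := by
  ext k
  simpa [RCLike.real_smul_eq_coe_mul] using congrFun (hA.mulVec_eigenvectorBasis i) k

lemma conjTranspose_eigenvectorUnitary_mul_mul_apply (hA : A.IsHermitian) (Z : Matrix ι ι 𝕜)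
    (i j : ι) :
    (hA.eigenvectorUnitary.1ᴴ * Z * hA.eigenvectorUnitary.1) i j =
      inner 𝕜 (hA.eigenvectorBasis i) (toEuclideanCLM (𝕜 := 𝕜) Z (hA.eigenvectorBasis j)) := by
  rw [EuclideanSpace.inner_eq_star_dotProduct, ofLp_toEuclideanCLM, Matrix.mul_assoc,
    Matrix.mul_apply, dotProduct_comm]
  simp [dotProduct, Matrix.mul_apply, mulVec]

lemma inner_toEuclideanCLM_left (Z : Matrix ι ι 𝕜) (a b : EuclideanSpace 𝕜 ι) :
    inner 𝕜 (toEuclideanCLM (𝕜 := 𝕜) Z a) b = inner 𝕜 a (toEuclideanCLM (𝕜 := 𝕜) Zᴴ b) := by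
  rw [← star_eq_conjTranspose, map_star, ContinuousLinearMap.star_eq_adjoint,
    ContinuousLinearMap.adjoint_inner_right]

lemma trace_mul_cfc_mul_conjTranspose_mul (hA : A.IsHermitian) (f : ℝ → ℝ)
    (S Z : Matrix ι ι 𝕜) :
    (S * cfc f A * Sᴴ * Z).trace = ∑ i, (f (hA.eigenvalues i) : 𝕜) *
      inner 𝕜 (toEuclideanCLM (𝕜 := 𝕜) S (hA.eigenvectorBasis i))
        (toEuclideanCLM (𝕜 := 𝕜) Z (toEuclideanCLM (𝕜 := 𝕜) S (hA.eigenvectorBasis i))) := by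
  have hcycle : (S * cfc f A * Sᴴ * Z).trace =
      (diagonal (fun i ↦ (f (hA.eigenvalues i) : 𝕜)) *
        (hA.eigenvectorUnitary.1ᴴ * (Sᴴ * Z * S) * hA.eigenvectorUnitary.1)).trace := by
    rw [cfc_eq_eigenvectorUnitary_mul hA, Matrix.mul_assoc (_ * _), trace_mul_comm,
      trace_mul_comm (diagonal _)]
    simp only [Matrix.mul_assoc]
    rw [← trace_mul_comm (Sᴴ * _)]
    simp only [Matrix.mul_assoc]
  rw [hcycle, trace]
  simp only [diag_apply, diagonal_mul, conjTranspose_eigenvectorUnitary_mul_mul_apply, map_mul,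
    mul_apply_eq_comp, inner_toEuclideanCLM_left]

lemma inner_eigenvectorBasis_toEuclideanCLM_self (hA : A.IsHermitian) (i : ι)
    (a : EuclideanSpace 𝕜 ι) :
    inner 𝕜 (hA.eigenvectorBasis i) (toEuclideanCLM (𝕜 := 𝕜) A a) =
      hA.eigenvalues i * inner 𝕜 (hA.eigenvectorBasis i) a := by
  have hsymm := inner_toEuclideanCLM_left A (hA.eigenvectorBasis i) a
  rwa [hA.eq, toEuclideanCLM_eigenvectorBasis, inner_smul_left, RCLike.conj_ofReal, eq_comm]
    at hsymm

lemma exists_inner_eigenvectorBasis_ne_zero (hA : A.IsHermitian) {Z : Matrix ι ι 𝕜}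
    (hAZ : ¬ Commute A Z) :
    ∃ i j, hA.eigenvalues i ≠ hA.eigenvalues j ∧
      inner 𝕜 (hA.eigenvectorBasis i) (toEuclideanCLM (𝕜 := 𝕜) Z (hA.eigenvectorBasis j)) ≠ 0 := by
  contrapose! hAZ
  refine EquivLike.injective (toEuclideanCLM (𝕜 := 𝕜)) (ContinuousLinearMap.coe_injective ?_)
  refine hA.eigenvectorBasis.toBasis.ext fun j ↦ ?_
  refine InnerProductSpace.ext_inner_left_basis hA.eigenvectorBasis.toBasis fun i ↦ ?_
  simp only [map_mul, ContinuousLinearMap.coe_coe, mul_apply_eq_comp,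
    OrthonormalBasis.coe_toBasis, toEuclideanCLM_eigenvectorBasis, map_smul, inner_smul_right,
    inner_eigenvectorBasis_toEuclideanCLM_self]
  by_cases hij : hA.eigenvalues i = hA.eigenvalues j
  · rw [hij]
  · rw [hAZ i j hij, mul_zero, mul_zero]

end Hermitian

section DoubleCfc

variable {𝕜 ι : Type*} [RCLike 𝕜] [Fintype ι] [DecidableEq ι] {A B : Matrix ι ι 𝕜}
  (hA : A.IsHermitian) (hB : B.IsHermitian)

/-- The matrix of inner products `⟨u j, w k⟩` between the eigenbases `u` of `A` and `w` of `B`. -/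
noncomputable def eigenbasisChange : Matrix ι ι 𝕜 :=
  hA.eigenvectorUnitary.1ᴴ * hB.eigenvectorUnitary.1

/-- The double operator integral `∑ j k, φ (l j) (m k) • |u j⟩⟨u j| |w k⟩⟨w k|`, where `u`, `w` are
the eigenbases of `A`, `B` and `l`, `m` their eigenvalues. -/
noncomputable def doubleCfc (φ : ℝ → ℝ → ℝ) : Matrix ι ι 𝕜 :=
  hA.eigenvectorUnitary.1 *
    of (fun j k ↦ (φ (hA.eigenvalues j) (hB.eigenvalues k) : 𝕜) * eigenbasisChange hA hB j k) *
    hB.eigenvectorUnitary.1ᴴ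

lemma conjTranspose_eigenvectorUnitary_mul_self :
    hA.eigenvectorUnitary.1ᴴ * hA.eigenvectorUnitary.1 = 1 :=
  Unitary.coe_star_mul_self _

lemma doubleCfc_one : doubleCfc hA hB (fun _ _ ↦ 1) = 1 := by
  have hU : hA.eigenvectorUnitary.1 * hA.eigenvectorUnitary.1ᴴ = 1 := Unitary.coe_mul_star_self _
  have hV : hB.eigenvectorUnitary.1 * hB.eigenvectorUnitary.1ᴴ = 1 := Unitary.coe_mul_star_self _
  have hsymbol : of (fun j k ↦ ((1 : ℝ) : 𝕜) * eigenbasisChange hA hB j k) =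
      eigenbasisChange hA hB := by ext; simp
  rw [doubleCfc, hsymbol, eigenbasisChange, ← Matrix.mul_assoc, hU, Matrix.one_mul, hV]

lemma mul_mul_conjTranspose_mul_eigenvectorUnitary_mul (P Q R S : Matrix ι ι 𝕜) :
    P * Q * hA.eigenvectorUnitary.1ᴴ * (hA.eigenvectorUnitary.1 * R * S) = P * (Q * R) * S := by
  rw [← Matrix.mul_assoc, ← Matrix.mul_assoc,
    Matrix.mul_assoc _ _ᴴ, conjTranspose_eigenvectorUnitary_mul_self, Matrix.mul_one,
    Matrix.mul_assoc P]

lemma cfc_mul_doubleCfc (f : ℝ → ℝ) (φ : ℝ → ℝ → ℝ) :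
    cfc f A * doubleCfc hA hB φ = doubleCfc hA hB (fun x y ↦ f x * φ x y) := by
  rw [cfc_eq_eigenvectorUnitary_mul hA, doubleCfc, doubleCfc,
    mul_mul_conjTranspose_mul_eigenvectorUnitary_mul]
  congr 2
  ext j k
  simp [mul_assoc]

lemma doubleCfc_mul_cfc (φ : ℝ → ℝ → ℝ) (g : ℝ → ℝ) :
    doubleCfc hA hB φ * cfc g B = doubleCfc hA hB (fun x y ↦ φ x y * g y) := by
  rw [cfc_eq_eigenvectorUnitary_mul hB, doubleCfc, doubleCfc,
    mul_mul_conjTranspose_mul_eigenvectorUnitary_mul]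
  congr 2
  ext j k
  simp [mul_right_comm]

lemma trace_doubleCfc_mul_conjTranspose (φ ψ : ℝ → ℝ → ℝ) :
    (doubleCfc hA hB φ * (doubleCfc hA hB ψ)ᴴ).trace = ∑ p : ι × ι,
      ((φ (hA.eigenvalues p.1) (hB.eigenvalues p.2) * ψ (hA.eigenvalues p.1) (hB.eigenvalues p.2) *
        ‖eigenbasisChange hA hB p.1 p.2‖ ^ 2 : ℝ) : 𝕜) := by
  rw [doubleCfc, doubleCfc, conjTranspose_mul, conjTranspose_mul, conjTranspose_conjTranspose,
    ← Matrix.mul_assoc hB.eigenvectorUnitary.1, mul_mul_conjTranspose_mul_eigenvectorUnitary_mul,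
    trace_mul_comm, ← Matrix.mul_assoc, conjTranspose_eigenvectorUnitary_mul_self, Matrix.one_mul,
    trace, Fintype.sum_prod_type]
  refine Finset.sum_congr rfl fun j _ ↦ ?_
  rw [diag_apply, Matrix.mul_apply]
  refine Finset.sum_congr rfl fun k _ ↦ ?_
  push_cast
  rw [← RCLike.mul_conj]
  simp only [of_apply, conjTranspose_apply, star_mul', RCLike.star_def, RCLike.conj_ofReal]
  ring

end DoubleCfc

section VariationalForm

variable {𝕜 ι : Type*} [RCLike 𝕜] [Fintype ι] [DecidableEq ι]

/-- A quadratic function of `Y` that is linear in `(ρ, σ)`. For positive scalars its supremum over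
`Y` is `σ * f (ρ / σ)` with `f x = x ^ 2 / (x + s)`. -/
noncomputable def variationalForm (ρ σ : Matrix ι ι 𝕜) (s : ℝ) (Y : Matrix ι ι 𝕜) : ℝ :=
  2 * RCLike.re (ρ * Y).trace - RCLike.re (ρ * (Y * Yᴴ)).trace -
    s * RCLike.re (σ * (Yᴴ * Y)).trace

variable {ρ σ X : Matrix ι ι 𝕜} {s : ℝ}

lemma variationalForm_doubleCfc (hρ : ρ.IsHermitian) (hσ : σ.IsHermitian) (φ : ℝ → ℝ → ℝ) :
    variationalForm ρ σ s (doubleCfc hρ hσ φ) = ∑ p : ι × ι,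
      (2 * hρ.eigenvalues p.1 * φ (hρ.eigenvalues p.1) (hσ.eigenvalues p.2) -
        (hρ.eigenvalues p.1 + s * hσ.eigenvalues p.2) *
          φ (hρ.eigenvalues p.1) (hσ.eigenvalues p.2) ^ 2) *
        ‖eigenbasisChange hρ hσ p.1 p.2‖ ^ 2 := by
  have hleft : ρ * doubleCfc hρ hσ φ = doubleCfc hρ hσ fun x y ↦ x * φ x y := by
    simpa only [cfc_id' ℝ ρ hρ.isSelfAdjoint] using cfc_mul_doubleCfc hρ hσ (fun x ↦ x) φ
  have hright : doubleCfc hρ hσ φ * σ = doubleCfc hρ hσ fun x y ↦ φ x y * y := by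
    simpa only [cfc_id' ℝ σ hσ.isSelfAdjoint] using doubleCfc_mul_cfc hρ hσ φ (fun y ↦ y)
  have hlinear : (ρ * doubleCfc hρ hσ φ).trace =
      (doubleCfc hρ hσ (fun x y ↦ x * φ x y) * (doubleCfc hρ hσ fun _ _ ↦ 1)ᴴ).trace := by
    rw [hleft, doubleCfc_one, conjTranspose_one, Matrix.mul_one]
  rw [variationalForm, hlinear, ← Matrix.mul_assoc, hleft, trace_mul_comm σ, Matrix.mul_assoc,
    trace_mul_comm (doubleCfc hρ hσ φ)ᴴ, hright]
  simp only [trace_doubleCfc_mul_conjTranspose, ← RCLike.ofReal_sum, RCLike.ofReal_re,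
    Finset.mul_sum, ← Finset.sum_sub_distrib]
  exact Finset.sum_congr rfl fun p _ ↦ by ring

/-- The symbol maximizes each summand of `variationalForm_doubleCfc` with `0 < y`. At `y = 0` it is
`0` by the convention `x / 0 = 0`. -/
lemma variationalForm_doubleCfc_div (hρ : ρ.PosSemidef) (hσ : σ.PosSemidef) (hs : 0 < s) :
    variationalForm ρ σ s (doubleCfc hρ.1 hσ.1 fun x y ↦ x / y / (x / y + s)) = ∑ p : ι × ι,
      hσ.1.eigenvalues p.2 * ‖eigenbasisChange hρ.1 hσ.1 p.1 p.2‖ ^ 2 *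
        ((hρ.1.eigenvalues p.1 / hσ.1.eigenvalues p.2) ^ 2 /
          (hρ.1.eigenvalues p.1 / hσ.1.eigenvalues p.2 + s)) := by
  rw [variationalForm_doubleCfc]
  refine Finset.sum_congr rfl fun p _ ↦ ?_
  have hx := hρ.eigenvalues_nonneg p.1
  generalize hρ.1.eigenvalues p.1 = x at hx ⊢
  obtain hy | hy := (hσ.eigenvalues_nonneg p.2).eq_or_lt
  · simp [← hy]
  · generalize hσ.1.eigenvalues p.2 = y at hy ⊢
    have hxy : x + y * s ≠ 0 := by positivity
    field_simp
    ring

lemma variationalForm_mul_mul_conjTranspose (hX : X.IsHermitian) (S Y : Matrix ι ι 𝕜) :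
    variationalForm (S * X * Sᴴ) (S * Sᴴ) s Y = ∑ i, rankOneForm (toEuclideanCLM (𝕜 := 𝕜) Y)
      (hX.eigenvalues i) s (toEuclideanCLM (𝕜 := 𝕜) S (hX.eigenvectorBasis i)) := by
  have hρ (Z : Matrix ι ι 𝕜) := trace_mul_cfc_mul_conjTranspose_mul hX (fun x ↦ x) S Z
  have hσ (Z : Matrix ι ι 𝕜) := trace_mul_cfc_mul_conjTranspose_mul hX (fun _ ↦ 1) S Z
  rw [cfc_id' ℝ X hX.isSelfAdjoint] at hρ
  rw [cfc_const_one ℝ X hX.isSelfAdjoint, Matrix.mul_one] at hσ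
  have hadj : (toEuclideanCLM (𝕜 := 𝕜) Y).adjoint = toEuclideanCLM (𝕜 := 𝕜) Yᴴ := by
    rw [← ContinuousLinearMap.star_eq_adjoint, ← map_star, star_eq_conjTranspose]
  simp only [variationalForm, rankOneForm, hρ, hσ, map_sum, RCLike.re_ofReal_mul, map_mul,
    mul_apply_eq_comp, ← hadj, ContinuousLinearMap.adjoint_inner_right, inner_self_eq_norm_sq,
    re_inner_apply_adjoint_apply, Finset.mul_sum, ← Finset.sum_sub_distrib]
  exact Finset.sum_congr rfl fun i _ ↦ by ring

lemma variationalForm_lt (hX : X.PosSemidef) (hs : 0 < s) (S Y : Matrix ι ι 𝕜)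
    (hXS : ¬ Commute X (Sᴴ * S)) :
    variationalForm (S * X * Sᴴ) (S * Sᴴ) s Y <
      ∑ i, ‖toEuclideanCLM (𝕜 := 𝕜) S (hX.1.eigenvectorBasis i)‖ ^ 2 *
        (hX.1.eigenvalues i ^ 2 / (hX.1.eigenvalues i + s)) := by
  obtain ⟨i, j, hij, hinner⟩ := exists_inner_eigenvectorBasis_ne_zero hX.1 hXS
  rw [map_mul, mul_apply_eq_comp, ← inner_toEuclideanCLM_left] at hinner
  rw [variationalForm_mul_mul_conjTranspose hX.1]
  exact sum_rankOneForm_lt _ hX.eigenvalues_nonneg hs hij hinner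

end VariationalForm

section MoorePenrose

variable {𝕜 ι : Type*} [RCLike 𝕜] [Fintype ι] [DecidableEq ι] {A ρ σ : Matrix ι ι 𝕜}

/-- The Moore–Penrose power `mpow` over any `RCLike` field and any finite index type. -/
noncomputable def moorePenrosePow (A : Matrix ι ι 𝕜) (t : ℝ) : Matrix ι ι 𝕜 :=
  cfc (fun x : ℝ ↦ if x = 0 then 0 else x ^ t) A

lemma isHermitian_moorePenrosePow (A : Matrix ι ι 𝕜) (t : ℝ) :
    (moorePenrosePow A t).IsHermitian :=
  cfc_predicate _ A

lemma moorePenrosePow_one (hA : A.IsHermitian) : moorePenrosePow A 1 = A := by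
  have hid : (fun x : ℝ ↦ if x = 0 then 0 else x ^ (1 : ℝ)) = fun x ↦ x := by
    ext x
    by_cases hx : x = 0 <;> simp [hx]
  rw [moorePenrosePow, hid, cfc_id' ℝ A hA.isSelfAdjoint]

lemma moorePenrosePow_mul (hA : A.PosSemidef) (t u : ℝ) :
    moorePenrosePow A t * moorePenrosePow A u = moorePenrosePow A (t + u) := by
  rw [moorePenrosePow, moorePenrosePow, ← cfc_mul _ _ A (continuousOn_spectrum A _)
    (continuousOn_spectrum A _), moorePenrosePow]
  refine cfc_congr fun x hx ↦ ?_
  rw [hA.1.spectrum_real_eq_range_eigenvalues] at hx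
  obtain ⟨i, rfl⟩ := hx
  obtain hzero | hpos := (hA.eigenvalues_nonneg i).eq_or_lt
  · simp [← hzero]
  · simp [hpos.ne', Real.rpow_add hpos]

lemma mul_moorePenrosePow_zero (hσ : σ.PosSemidef)
    (hsupp : ∀ v : ι → 𝕜, σ *ᵥ v = 0 → ρ *ᵥ v = 0) : ρ * moorePenrosePow σ 0 = ρ := by
  have hσP : σ * moorePenrosePow σ 0 = σ := by
    simpa only [moorePenrosePow_one hσ.1, add_zero] using moorePenrosePow_mul hσ 1 0
  refine ext_iff_mulVec.mpr fun v ↦ ?_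
  have hker : σ *ᵥ (moorePenrosePow σ 0 *ᵥ v - v) = 0 := by
    rw [mulVec_sub, mulVec_mulVec, hσP, sub_self]
  simpa only [mulVec_sub, mulVec_mulVec, sub_eq_zero] using hsupp _ hker

lemma moorePenrosePow_half_mul_mul (hρ : ρ.IsHermitian) (hσ : σ.PosSemidef)
    (hsupp : ∀ v : ι → 𝕜, σ *ᵥ v = 0 → ρ *ᵥ v = 0) :
    moorePenrosePow σ (1 / 2) *
      (moorePenrosePow σ (-(1 / 2)) * ρ * moorePenrosePow σ (-(1 / 2))) *
        moorePenrosePow σ (1 / 2) = ρ := by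
  have hρP : ρ * moorePenrosePow σ 0 = ρ := mul_moorePenrosePow_zero hσ hsupp
  have hPρ : moorePenrosePow σ 0 * ρ = ρ := by
    simpa [(isHermitian_moorePenrosePow σ 0).eq, hρ.eq] using congrArg conjTranspose hρP
  calc _ = moorePenrosePow σ (1 / 2) * moorePenrosePow σ (-(1 / 2)) * ρ *
        (moorePenrosePow σ (-(1 / 2)) * moorePenrosePow σ (1 / 2)) := by
          simp only [Matrix.mul_assoc]
    _ = ρ := by
      rw [moorePenrosePow_mul hσ, moorePenrosePow_mul hσ, add_neg_cancel, neg_add_cancel, hPρ, hρP]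

lemma ite_rpow_mul_ite_rpow_one_sub {x y α : ℝ} (hx : 0 ≤ x) (hy : 0 ≤ y) (hα : α ≠ 0) :
    (if x = 0 then 0 else x ^ α) * (if y = 0 then 0 else y ^ (1 - α)) = y * (x / y) ^ α := by
  obtain rfl | hx := hx.eq_or_lt
  · simp [Real.zero_rpow hα]
  obtain rfl | hy := hy.eq_or_lt
  · simp
  rw [if_neg hx.ne', if_neg hy.ne', Real.div_rpow hx.le hy.le, Real.rpow_sub hy, Real.rpow_one]
  ring

lemma re_trace_moorePenrosePow_mul (hρ : ρ.PosSemidef) (hσ : σ.PosSemidef) {α : ℝ} (hα : α ≠ 0) :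
    RCLike.re (moorePenrosePow ρ α * moorePenrosePow σ (1 - α)).trace = ∑ p : ι × ι,
      hσ.1.eigenvalues p.2 * ‖eigenbasisChange hρ.1 hσ.1 p.1 p.2‖ ^ 2 *
        (hρ.1.eigenvalues p.1 / hσ.1.eigenvalues p.2) ^ α := by
  have hdouble : moorePenrosePow ρ α * moorePenrosePow σ (1 - α) =
      doubleCfc hρ.1 hσ.1 (fun x y ↦ (if x = 0 then 0 else x ^ α) * 1 *
        (if y = 0 then 0 else y ^ (1 - α))) * (doubleCfc hρ.1 hσ.1 fun _ _ ↦ 1)ᴴ := by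
    rw [← doubleCfc_mul_cfc, ← cfc_mul_doubleCfc, doubleCfc_one, conjTranspose_one, Matrix.mul_one,
      Matrix.mul_one, moorePenrosePow, moorePenrosePow]
  rw [hdouble, trace_doubleCfc_mul_conjTranspose, ← RCLike.ofReal_sum, RCLike.ofReal_re]
  refine Finset.sum_congr rfl fun p _ ↦ ?_
  rw [mul_one, mul_one, ite_rpow_mul_ite_rpow_one_sub (hρ.eigenvalues_nonneg _)
    (hσ.eigenvalues_nonneg _) hα, mul_right_comm]

lemma re_trace_mul_moorePenrosePow_mul {X : Matrix ι ι 𝕜} (hX : X.IsHermitian)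
    (S : Matrix ι ι 𝕜) {α : ℝ} (hα : α ≠ 0) :
    RCLike.re (S * moorePenrosePow X α * Sᴴ).trace =
      ∑ i, ‖toEuclideanCLM (𝕜 := 𝕜) S (hX.eigenvectorBasis i)‖ ^ 2 * hX.eigenvalues i ^ α := by
  have hite (x : ℝ) : (if x = 0 then 0 else x ^ α) = x ^ α :=
    ite_eq_right_iff.mpr fun hx ↦ by rw [hx, Real.zero_rpow hα]
  rw [← Matrix.mul_one (_ * _ * _), moorePenrosePow, trace_mul_cfc_mul_conjTranspose_mul hX,
    map_sum]
  refine Finset.sum_congr rfl fun i _ ↦ ?_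
  rw [RCLike.re_ofReal_mul, hite, map_one, one_apply_eq_self, inner_self_eq_norm_sq, mul_comm]

lemma re_trace_moorePenrosePow_mul_lt {X : Matrix ι ι 𝕜} (hX : X.PosSemidef) (S : Matrix ι ι 𝕜)
    (hXS : ¬ Commute X (Sᴴ * S)) {α : ℝ} (hα : α ∈ Set.Ioo 1 2) :
    RCLike.re (moorePenrosePow (S * X * Sᴴ) α * moorePenrosePow (S * Sᴴ) (1 - α)).trace <
      RCLike.re (S * moorePenrosePow X α * Sᴴ).trace := by
  have hα₀ : α ≠ 0 := (zero_lt_one.trans hα.1).ne'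
  have hρ : (S * X * Sᴴ).PosSemidef := hX.mul_mul_conjTranspose_same S
  have hσ : (S * Sᴴ).PosSemidef := posSemidef_self_mul_conjTranspose S
  rw [re_trace_moorePenrosePow_mul hρ hσ hα₀, re_trace_mul_moorePenrosePow_mul hX.1 S hα₀]
  refine sum_mul_rpow_lt_of_sum_mul_sq_div_lt hα
    (fun p ↦ div_nonneg (hρ.eigenvalues_nonneg _) (hσ.eigenvalues_nonneg _))
    hX.eigenvalues_nonneg fun s hs ↦ ?_
  rw [← variationalForm_doubleCfc_div hρ hσ hs]
  exact variationalForm_lt hX hs S _ hXS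

end MoorePenrose

theorem stmt18_general {𝕜 ι : Type*} [RCLike 𝕜] [Fintype ι] [DecidableEq ι]
    {ρ σ : Matrix ι ι 𝕜} (hρ : ρ.PosSemidef) (hσ : σ.PosSemidef)
    (hsupp : ∀ v : ι → 𝕜, σ *ᵥ v = 0 → ρ *ᵥ v = 0) (hcomm : ¬ Commute ρ σ)
    {α : ℝ} (hα : α ∈ Set.Ioo 1 2) :
    RCLike.re (moorePenrosePow ρ α * moorePenrosePow σ (1 - α)).trace <
      RCLike.re (moorePenrosePow σ (1 / 2) *
        moorePenrosePow (moorePenrosePow σ (-(1 / 2)) * ρ * moorePenrosePow σ (-(1 / 2))) α *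
          moorePenrosePow σ (1 / 2)).trace := by
  set S := moorePenrosePow σ (1 / 2)
  set X := moorePenrosePow σ (-(1 / 2)) * ρ * moorePenrosePow σ (-(1 / 2))
  have hS : Sᴴ = S := isHermitian_moorePenrosePow σ _
  have hX : X.PosSemidef := by
    simpa only [(isHermitian_moorePenrosePow σ _).eq] using
      hρ.mul_mul_conjTranspose_same (moorePenrosePow σ (-(1 / 2)))
  have hSS : S * S = σ := by
    rw [moorePenrosePow_mul hσ, add_halves, moorePenrosePow_one hσ.1]
  have hSXS : S * X * S = ρ := moorePenrosePow_half_mul_mul hρ.1 hσ hsupp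
  have hXσ : ¬ Commute X σ := fun h ↦ hcomm <| by
    have hSσ : Commute S σ := hSS ▸ (Commute.refl S).mul_right (Commute.refl S)
    exact hSXS ▸ (hSσ.mul_left h).mul_left hSσ
  have hlt := re_trace_moorePenrosePow_mul_lt hX S (by rwa [hS, hSS]) hα
  rwa [hS, hSS, hSXS] at hlt

/-- for positive semidefinite non-commuting `ρ, σ` with
`supp ρ ⊆ supp σ` and `α ∈ (1,2)`,
`Tr(ρ^α σ^{1−α}) < Tr(σ^{1/2} (σ^{-1/2} ρ σ^{-1/2})^α σ^{1/2})`. -/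
theorem stmt18 {n : ℕ} (ρ σ : Matrix (Fin n) (Fin n) ℂ)
    (hρ : ρ.PosSemidef) (hσ : σ.PosSemidef)
    (hsupp : ∀ v : Fin n → ℂ, σ *ᵥ v = 0 → ρ *ᵥ v = 0)
    (hcomm : ρ * σ ≠ σ * ρ)
    (α : ℝ) (hα1 : 1 < α) (hα2 : α < 2) :
    (Matrix.trace (mpow ρ α * mpow σ (1 - α))).re
      < (Matrix.trace (mpow σ (1/2) *
          mpow (mpow σ (-(1/2)) * ρ * mpow σ (-(1/2))) α * mpow σ (1/2))).re :=
  stmt18_general hρ hσ hsupp hcomm ⟨hα1, hα2⟩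
end
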